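/- arXiv:2510.17344 — 2 statements merged into one kernel-verified Lean document; each statement's English description precedes it below -/
import Mathlib

section
/- For the graph H of the twin-cover construction obtained from an Arc Supply instance (D, δ, L), the set consisting of all purple vertex nodes and all black arc nodes is a twin cover of H; consequently the twin cover number of H is at most |V(D)| + 2|A(D)|. -/
namespace TwinCoverConstruction

/-- An Arc Supply instance: a loopless digraph with no double arcs, a demand
for each vertex, and a nonempty list of supply pairs for each arc. -/
structure Instance (V : Type*) [Fintype V] [DecidableEq V] where
  /-- the arcs of the digraph -/
  arcs : Finset (V × V)
  loopless : ∀ u : V, (u, u) ∉ arcs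
  noDouble : ∀ u v : V, (u, v) ∈ arcs → (v, u) ∉ arcs
  /-- the demand of each vertex -/
  demand : V → ℕ
  /-- the list of supply pairs of each arc -/
  supply : V × V → List (ℕ × ℕ)
  supply_nonempty : ∀ a ∈ arcs, supply a ≠ []

variable {V : Type*} [Fintype V] [DecidableEq V]

/-- The Arc Supply instance is a yes-instance: one can select a supply pair
from the list of each arc so that the supplies sent to each vertex sum up
exactly to its demand. -/
def Instance.Yes (I : Instance V) : Prop :=
  ∃ ρ : V × V → ℕ × ℕ, (∀ a ∈ I.arcs, ρ a ∈ I.supply a) ∧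
    ∀ u : V, I.demand u =
      (∑ a ∈ I.arcs.filter (fun a => a.1 = u), (ρ a).1) +
      (∑ a ∈ I.arcs.filter (fun a => a.2 = u), (ρ a).2)

/-- `Σ`: twice the sum of all demands and of all entries of all supply pairs. -/
def Instance.sigma (I : Instance V) : ℕ :=
  2 * ((∑ u : V, I.demand u) +
    ∑ a ∈ I.arcs, ((I.supply a).map (fun p => p.1 + p.2)).sum)

/-- The number of supply nodes of the supply clique of side `s` and (0-based)
list index `i` of an arc: the corresponding component of the `i`-th supply
pair. -/
def Instance.xval (I : Instance V) (a : V × V) (s : Bool) (i : ℕ) : ℕ :=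
  if s then ((I.supply a).getD i (0, 0)).2 else ((I.supply a).getD i (0, 0)).1

/-- The number of index nodes of the supply clique of side `s` and (0-based)
list index `i` of an arc: `Σ² − Σ·i` on the tail side and `Σ·i` on the head
side. -/
def Instance.idxCount (I : Instance V) (a : V × V) (s : Bool) (i : ℕ) : ℕ :=
  if s then I.sigma * i else I.sigma ^ 2 - I.sigma * i

/-- Pre-nodes of the twin-cover construction. -/
inductive PreNode (V : Type*) : Type _
  /-- the purple vertex node for `u` -/
  | vnode (u : V)
  /-- the `p`-th yellow node of the demand clique for `u` (`p < δ(u)`) -/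
  | demandN (u : V) (p : ℕ)
  /-- a black arc node of the arc `a` (`side = false` for the tail `u`,
  `side = true` for the head `v`) -/
  | arcnode (a : V × V) (side : Bool)
  /-- the `p`-th brown node of the reservoir clique for `a` (`p < Σ²`) -/
  | reservoir (a : V × V) (p : ℕ)
  /-- the `p`-th orange supply node of the supply clique of side `side` and
  list index `i` for the arc `a` -/
  | supplyN (a : V × V) (side : Bool) (i p : ℕ)
  /-- the `p`-th teal index node of the supply clique of side `side` and list
  index `i` for the arc `a` -/
  | indexN (a : V × V) (side : Bool) (i p : ℕ)

/-- The pre-nodes actually present in the twin-cover construction. -/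
def Valid (I : Instance V) : PreNode V → Prop
  | PreNode.vnode _ => True
  | PreNode.demandN u p => p < I.demand u
  | PreNode.arcnode a _ => a ∈ I.arcs
  | PreNode.reservoir a p => a ∈ I.arcs ∧ p < I.sigma ^ 2
  | PreNode.supplyN a s i p => a ∈ I.arcs ∧ i < (I.supply a).length ∧ p < I.xval a s i
  | PreNode.indexN a s i p => a ∈ I.arcs ∧ i < (I.supply a).length ∧ p < I.idxCount a s i

/-- Nodes of the twin-cover construction. -/
abbrev Node (I : Instance V) := {w : PreNode V // Valid I w}

/-- The endpoint of the arc `a` selected by `side`. -/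
def endpoint (a : V × V) (side : Bool) : V := if side then a.2 else a.1

/-- The base adjacency relation of the twin-cover construction (to be
symmetrized). -/
def Rel : PreNode V → PreNode V → Prop := fun w z =>
  (∃ u p, w = PreNode.demandN u p ∧ z = PreNode.vnode u) ∨
  (∃ u p q, w = PreNode.demandN u p ∧ z = PreNode.demandN u q) ∨
  (∃ a p q, w = PreNode.reservoir a p ∧ z = PreNode.reservoir a q) ∨
  (∃ a s p, w = PreNode.reservoir a p ∧ z = PreNode.arcnode a s) ∨
  (∃ a s i p q, w = PreNode.supplyN a s i p ∧ z = PreNode.supplyN a s i q) ∨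
  (∃ a s i p q, w = PreNode.supplyN a s i p ∧ z = PreNode.indexN a s i q) ∨
  (∃ a s i p q, w = PreNode.indexN a s i p ∧ z = PreNode.indexN a s i q) ∨
  (∃ a s i p, w = PreNode.supplyN a s i p ∧ z = PreNode.vnode (endpoint a s)) ∨
  (∃ a s i p, w = PreNode.indexN a s i p ∧ z = PreNode.vnode (endpoint a s)) ∨
  (∃ a s i p, w = PreNode.supplyN a s i p ∧ z = PreNode.arcnode a s) ∨
  (∃ a s i p, w = PreNode.indexN a s i p ∧ z = PreNode.arcnode a s)

/-- The graph `H` of the twin-cover construction. -/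
def H (I : Instance V) : SimpleGraph (Node I) :=
  SimpleGraph.fromRel (fun a b => Rel a.1 b.1)

/-- The initial configuration: all orange supply nodes and all brown reservoir
nodes. -/
def initialS (I : Instance V) : Set (Node I) :=
  {w | (∃ a s i p, w.1 = PreNode.supplyN a s i p) ∨ ∃ a p, w.1 = PreNode.reservoir a p}

/-- A twin-cover solution: a set `T` of nodes with `|T| = |S|` satisfying
conditions (T1)–(T4). -/
def IsTCSolution (I : Instance V) (T : Set (Node I)) : Prop :=
  T.ncard = (initialS I).ncard ∧
  -- (T1): every yellow node is in `T`
  (∀ w : Node I, (∃ u p, w.1 = PreNode.demandN u p) → w ∈ T) ∧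
  -- (T2): no brown node is in `T`
  (∀ w : Node I, (∃ a p, w.1 = PreNode.reservoir a p) → w ∉ T) ∧
  -- (T3): for each arc and each of its two arc nodes, among the adjacent
  -- supply cliques containing at least one orange node, exactly one has all
  -- of its teal nodes in `T` and none of its orange nodes in `T`, and every
  -- other such supply clique has all of its orange nodes in `T` and none of
  -- its teal nodes in `T`
  (∀ a ∈ I.arcs, ∀ s : Bool, ∃ i₀ : ℕ, i₀ < (I.supply a).length ∧ 0 < I.xval a s i₀ ∧
      (∀ w : Node I, (∃ p, w.1 = PreNode.indexN a s i₀ p) → w ∈ T) ∧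
      (∀ w : Node I, (∃ p, w.1 = PreNode.supplyN a s i₀ p) → w ∉ T) ∧
      (∀ i : ℕ, i < (I.supply a).length → 0 < I.xval a s i → i ≠ i₀ →
        (∀ w : Node I, (∃ p, w.1 = PreNode.supplyN a s i p) → w ∈ T) ∧
        (∀ w : Node I, (∃ p, w.1 = PreNode.indexN a s i p) → w ∉ T))) ∧
  -- (T4): no purple or black node is in `T`
  (∀ w : Node I, ((∃ u, w.1 = PreNode.vnode u) ∨ ∃ a s, w.1 = PreNode.arcnode a s) → w ∉ T)

/-- The discovery budget `b = 2Δ + |A(D)| · 2Σ²`. -/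
def Instance.budget (I : Instance V) : ℕ :=
  2 * (∑ u : V, I.demand u) + I.arcs.card * (2 * I.sigma ^ 2)

end TwinCoverConstruction

/-- `X` is a twin cover of `K`: every connected component of `K − X` is a
clique all of whose vertices are pairwise twins in `K` (they have the same
closed neighborhood in `K`). -/
def IsTwinCover {W : Type*} (K : SimpleGraph W) (X : Set W) : Prop :=
  ∀ (a b : W) (ha : a ∈ Xᶜ) (hb : b ∈ Xᶜ),
    (SimpleGraph.induce Xᶜ K).Reachable ⟨a, ha⟩ ⟨b, hb⟩ →
      ∀ w : W, (w = a ∨ K.Adj a w) ↔ (w = b ∨ K.Adj b w)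

/-- The twin cover number: the minimum size of a twin cover. -/
noncomputable def twinCoverNumber {W : Type*} (K : SimpleGraph W) : ℕ :=
  sInf {k | ∃ X : Set W, IsTwinCover K X ∧ X.ncard = k}


namespace TwinCoverConstruction

/-- Adjacent pre-nodes that are neither purple nor black have the same closed neighborhood. -/
theorem rel_twins {V : Type*} [Fintype V] [DecidableEq V] (w z y : PreNode V)
    (hz : ¬ ((∃ u, z = PreNode.vnode u) ∨ ∃ a s, z = PreNode.arcnode a s))
    (h : Rel w z) : (y = w ∨ Rel w y ∨ Rel y w) ↔ (y = z ∨ Rel z y ∨ Rel y z) := by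
  cases w <;> cases z <;> simp [Rel] at h hz <;> cases y <;> simp [Rel] <;> grind

theorem H_closed {V : Type*} [Fintype V] [DecidableEq V] (I : Instance V) (a w : Node I) :
    (w = a ∨ (H I).Adj a w) ↔ (w.1 = a.1 ∨ Rel a.1 w.1 ∨ Rel w.1 a.1) := by
  simp only [H, SimpleGraph.fromRel_adj, ne_eq, ← Subtype.ext_iff]
  tauto

theorem isTwinCover_H {V : Type*} [Fintype V] [DecidableEq V] (I : Instance V) :
    IsTwinCover (H I)
      {w : Node I | (∃ u, w.1 = PreNode.vnode u) ∨ ∃ a s, w.1 = PreNode.arcnode a s} := by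
  intro a b ha hb ⟨p⟩ w
  generalize hA : Subtype.mk a ha = A at p
  generalize hB : Subtype.mk b hb = B at p
  obtain rfl : A.1 = a := by rw [← hA]
  obtain rfl : B.1 = b := by rw [← hB]
  clear hA hB ha hb
  induction p with
  | nil => rfl
  | @cons u v x hadj p ih =>
    refine Iff.trans ?_ ih
    have h : (H I).Adj u.1 v.1 := hadj
    simp only [H, SimpleGraph.fromRel_adj] at h
    rw [H_closed, H_closed]
    rcases h.2 with h | h
    · exact rel_twins _ _ _ v.2 h
    · exact (rel_twins _ _ _ u.2 h).symm

theorem ncard_cover_le {V : Type*} [Fintype V] [DecidableEq V] (I : Instance V) :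
    {w : Node I | (∃ u, w.1 = PreNode.vnode u) ∨ ∃ a s, w.1 = PreNode.arcnode a s}.ncard
      ≤ Fintype.card V + 2 * I.arcs.card := by
  let f : V ⊕ (I.arcs × Bool) → Node I := fun x => match x with
    | Sum.inl u => ⟨PreNode.vnode u, trivial⟩
    | Sum.inr (a, s) => ⟨PreNode.arcnode a.1 s, a.2⟩
  have hsub : {w : Node I | (∃ u, w.1 = PreNode.vnode u) ∨ ∃ a s, w.1 = PreNode.arcnode a s}
      ⊆ f '' Set.univ := by
    rintro ⟨w, hw⟩ (⟨u, rfl⟩ | ⟨a, s, rfl⟩)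
    · exact ⟨Sum.inl u, trivial, rfl⟩
    · exact ⟨Sum.inr (⟨a, hw⟩, s), trivial, rfl⟩
  refine (Set.ncard_le_ncard hsub (Set.toFinite _)).trans ?_
  refine (Set.ncard_image_le (Set.toFinite _)).trans ?_
  rw [Set.ncard_univ, Nat.card_eq_fintype_card]
  simp [mul_comm]

end TwinCoverConstruction

open TwinCoverConstruction in
/-- For the graph `H` of the twin-cover construction, the set of all purple
vertex nodes and all black arc nodes is a twin cover of `H`; consequently the
twin cover number of `H` is at most `|V(D)| + 2|A(D)|`. -/
theorem twin_cover_number_le {V : Type*} [Fintype V] [DecidableEq V] (I : Instance V) :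
    IsTwinCover (H I)
      {w : Node I | (∃ u, w.1 = PreNode.vnode u) ∨ ∃ a s, w.1 = PreNode.arcnode a s} ∧
    twinCoverNumber (H I) ≤ Fintype.card V + 2 * I.arcs.card := by
  refine ⟨isTwinCover_H I, le_trans (Nat.sInf_le ?_) (ncard_cover_le I)⟩
  exact ⟨_, isTwinCover_H I, rfl⟩
end

section
/- For the graph H of the bandwidth construction obtained from an Arc Supply instance (D, δ, L) in which every vertex of D has total degree at most four and all supply lists have the same length t, the bandwidth satisfies bw(H) ≤ 66κ, where κ = |V(D)| + |A(D)|. -/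
namespace BandwidthConstruction

/-- An Arc Supply instance suitable for the bandwidth construction: a loopless
digraph with no double arcs in which every vertex has total degree at most
four, a demand for each vertex, a nonempty list of supply pairs of common
length `t` for each arc, together with an assignment of a distinct type among
`a, b, c, d` (represented by `Fin 4`) to each neighbor of each vertex. -/
structure Instance (V : Type*) [Fintype V] [DecidableEq V] where
  /-- the arcs of the digraph -/
  arcs : Finset (V × V)
  loopless : ∀ u : V, (u, u) ∉ arcs
  noDouble : ∀ u v : V, (u, v) ∈ arcs → (v, u) ∉ arcs
  /-- the demand of each vertex -/
  demand : V → ℕ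
  /-- the list of supply pairs of each arc -/
  supply : V × V → List (ℕ × ℕ)
  supply_nonempty : ∀ a ∈ arcs, supply a ≠ []
  /-- the common length of all supply lists -/
  t : ℕ
  supply_len : ∀ a ∈ arcs, (supply a).length = t
  /-- every vertex has total (in- plus out-) degree at most four -/
  deg_le_four : ∀ u : V, (arcs.filter (fun a => a.1 = u ∨ a.2 = u)).card ≤ 4
  /-- the type assigned to each neighbor of each vertex -/
  typ : V → V → Fin 4
  typ_inj : ∀ u v w : V, ((u, v) ∈ arcs ∨ (v, u) ∈ arcs) →
    ((u, w) ∈ arcs ∨ (w, u) ∈ arcs) → typ u v = typ u w → v = w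

variable {V : Type*} [Fintype V] [DecidableEq V]

/-- The Arc Supply instance is a yes-instance: one can select a supply pair
from the list of each arc so that the supplies sent to each vertex sum up
exactly to its demand. -/
def Instance.Yes (I : Instance V) : Prop :=
  ∃ ρ : V × V → ℕ × ℕ, (∀ a ∈ I.arcs, ρ a ∈ I.supply a) ∧
    ∀ u : V, I.demand u =
      (∑ a ∈ I.arcs.filter (fun a => a.1 = u), (ρ a).1) +
      (∑ a ∈ I.arcs.filter (fun a => a.2 = u), (ρ a).2)

/-- `Σ`: three times the sum of all demands and of all entries of all supply
pairs. -/
def Instance.sg (I : Instance V) : ℕ :=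
  3 * ((∑ u : V, I.demand u) +
    ∑ a ∈ I.arcs, ((I.supply a).map (fun p => p.1 + p.2)).sum)

/-- The length `4Σ(t+1)` of the side rails of the vertex-gadgets. -/
def Instance.vlen (I : Instance V) : ℕ := 4 * I.sg * (I.t + 1)

/-- The length `4Σt` of the side rails of the arc-gadgets. -/
def Instance.alen (I : Instance V) : ℕ := 4 * I.sg * I.t

/-- The number of orange token-bearing nodes of the side `s` of the sub-ladder
of (0-based, from the top) index `k` of an arc-gadget: the corresponding
component of the `k`-th supply pair. -/
def Instance.xval (I : Instance V) (a : V × V) (s : Bool) (k : ℕ) : ℕ :=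
  if s then ((I.supply a).getD k (0, 0)).2 else ((I.supply a).getD k (0, 0)).1

/-- The (0-based, from the top) sub-ladder index of the position `p`
(measured from the bottom) on a side rail of an arc-gadget. -/
def Instance.subIdx (I : Instance V) (p : ℕ) : ℕ := I.t - 1 - p / (4 * I.sg)

/-- Pre-nodes of the bandwidth construction.  All positions `p` on side rails
are measured from the bottom (`p = 0` is the bottommost node). -/
inductive PreNode (V : Type*) : Type _
  /-- the `p`-th node of the isolated side rail of the vertex-gadget for `u` -/
  | iso (u : V) (p : ℕ)
  /-- the `p`-th node of the connected side rail of the vertex-gadget for `u` -/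
  | con (u : V) (p : ℕ)
  /-- the `q`-th internal (gray spacer) node of the `p`-th rung of the
  vertex-gadget for `u` (`q < 3`) -/
  | vspacer (u : V) (p q : ℕ)
  /-- the `p`-th node of the side rail of side `s` of the arc-gadget for `a`
  (`s = false` is the tail side, `s = true` the head side) -/
  | rail (a : V × V) (s : Bool) (p : ℕ)
  /-- the `q`-th internal (gray spacer) node of the rung of the sub-ladder of
  (0-based, from the top) index `k` of the arc-gadget for `a` (`q < 5`) -/
  | aspacer (a : V × V) (k q : ℕ)

/-- The pre-nodes actually present in the bandwidth construction. -/
def Valid (I : Instance V) : PreNode V → Prop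
  | PreNode.iso _ p => p < I.vlen
  | PreNode.con _ p => p < I.vlen
  | PreNode.vspacer _ p q => p < I.vlen ∧ q < 3
  | PreNode.rail a _ p => a ∈ I.arcs ∧ p < I.alen
  | PreNode.aspacer a k q => a ∈ I.arcs ∧ k < I.t ∧ q < 5

/-- Nodes of the bandwidth construction. -/
abbrev Node (I : Instance V) := {w : PreNode V // Valid I w}

/-- The endpoint of the arc `a` selected by `side`. -/
def endpoint (a : V × V) (side : Bool) : V := if side then a.2 else a.1

/-- Yellow demand nodes: the `δ(u)` topmost nodes of the connected side rail. -/
def Yellow (I : Instance V) : PreNode V → Prop := fun w =>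
  ∃ u p, w = PreNode.con u p ∧ I.vlen - I.demand u ≤ p ∧ p < I.vlen

/-- Purple nodes: the non-yellow nodes of the connected side rails. -/
def Purple (I : Instance V) : PreNode V → Prop := fun w =>
  ∃ u p, w = PreNode.con u p ∧ p < I.vlen - I.demand u

/-- Brown reservoir nodes: the `δ(u)` bottommost nodes of the isolated side
rail. -/
def Brown (I : Instance V) : PreNode V → Prop := fun w =>
  ∃ u p, w = PreNode.iso u p ∧ p < I.demand u

/-- Teal nodes: the non-brown nodes of the isolated side rails. -/
def Teal (I : Instance V) : PreNode V → Prop := fun w =>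
  ∃ u p, w = PreNode.iso u p ∧ I.demand u ≤ p ∧ p < I.vlen

/-- Orange token-bearing nodes of the arc-gadgets: within its sub-ladder,
above the black rung node come three gray spacer nodes, then the orange nodes
separated by three gray spacer nodes each. -/
def Orange (I : Instance V) : PreNode V → Prop := fun w =>
  ∃ a s p, w = PreNode.rail a s p ∧ p < I.alen ∧
    p % (4 * I.sg) % 4 = 0 ∧ 4 ≤ p % (4 * I.sg) ∧
    p % (4 * I.sg) ≤ 4 * I.xval a s (I.subIdx p)

/-- Black rung nodes of the arc-gadgets: the bottommost node of each side rail
of each sub-ladder. -/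
def Black (I : Instance V) : PreNode V → Prop := fun w =>
  ∃ a s p, w = PreNode.rail a s p ∧ p < I.alen ∧ p % (4 * I.sg) = 0

/-- Gray spacer nodes: the internal nodes of all rungs together with the
side-rail nodes of arc-gadgets that are neither black nor orange. -/
def Gray (I : Instance V) : PreNode V → Prop := fun w =>
  (∃ u p q, w = PreNode.vspacer u p q) ∨ (∃ a k q, w = PreNode.aspacer a k q) ∨
  (∃ a s p, w = PreNode.rail a s p ∧ ¬ Orange I w ∧ ¬ Black I w)

/-- The base adjacency relation of the bandwidth construction (to be
symmetrized). -/
def Rel (I : Instance V) : PreNode V → PreNode V → Prop := fun w z =>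
  -- the side rails are paths
  (∃ u p, w = PreNode.iso u p ∧ z = PreNode.iso u (p + 1)) ∨
  (∃ u p, w = PreNode.con u p ∧ z = PreNode.con u (p + 1)) ∨
  (∃ a s p, w = PreNode.rail a s p ∧ z = PreNode.rail a s (p + 1)) ∨
  -- the rungs of the vertex-gadgets (paths of length four)
  (∃ u p, w = PreNode.iso u p ∧ z = PreNode.vspacer u p 0) ∨
  (∃ u p q, w = PreNode.vspacer u p q ∧ z = PreNode.vspacer u p (q + 1)) ∨
  (∃ u p, w = PreNode.vspacer u p 2 ∧ z = PreNode.con u p) ∨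
  -- the rungs of the arc-gadgets (paths of length six)
  (∃ a k, k < I.t ∧ w = PreNode.rail a false ((I.t - 1 - k) * (4 * I.sg)) ∧
      z = PreNode.aspacer a k 0) ∨
  (∃ a k q, w = PreNode.aspacer a k q ∧ z = PreNode.aspacer a k (q + 1)) ∨
  (∃ a k, k < I.t ∧ w = PreNode.aspacer a k 4 ∧
      z = PreNode.rail a true ((I.t - 1 - k) * (4 * I.sg))) ∨
  -- the black rung node of sub-ladder `k` of side `s` is adjacent to the
  -- bottommost node of the assigned type of sub-ladder `k` of the connected
  -- side rail of the corresponding vertex-gadget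
  (∃ a s k, k < I.t ∧
      w = PreNode.rail a s ((I.t - 1 - k) * (4 * I.sg)) ∧
      z = PreNode.con (endpoint a s)
        ((I.t - k) * (4 * I.sg) + (I.typ (endpoint a s) (endpoint a (!s))).val)) ∨
  -- the `j`-th orange node (from the bottom) of sub-ladder `k` of side `s` is
  -- adjacent to the `j`-th subsequent node of the assigned type of sub-ladder
  -- `k` of the connected side rail of the corresponding vertex-gadget
  (∃ a s k j, k < I.t ∧ 1 ≤ j ∧ j ≤ I.xval a s k ∧
      w = PreNode.rail a s ((I.t - 1 - k) * (4 * I.sg) + 4 * j) ∧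
      z = PreNode.con (endpoint a s)
        ((I.t - k) * (4 * I.sg) + (I.typ (endpoint a s) (endpoint a (!s))).val + 4 * j))

/-- The graph `H` of the bandwidth construction. -/
def H (I : Instance V) : SimpleGraph (Node I) :=
  SimpleGraph.fromRel (fun a b => Rel I a.1 b.1)

/-- The initial configuration: all brown reservoir nodes and all orange
token-bearing nodes. -/
def initialS (I : Instance V) : Set (Node I) :=
  {w | Brown I w.1 ∨ Orange I w.1}

/-- The gray, black, and orange nodes. -/
def GBO (I : Instance V) : Set (Node I) :=
  {w | Gray I w.1 ∨ Black I w.1 ∨ Orange I w.1}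

/-- `w` and `w'` lie in the same connected component of the subgraph of `H`
induced by the gray, black, and orange nodes. -/
def ReachGBO (I : Instance V) (w w' : Node I) : Prop :=
  ∃ (h : w ∈ GBO I) (h' : w' ∈ GBO I),
    (SimpleGraph.induce (GBO I) (H I)).Reachable ⟨w, h⟩ ⟨w', h'⟩

/-- A bandwidth solution: a set `T` of nodes with `|T| = |S|` satisfying
conditions (B1)–(B5). -/
def IsBWSolution (I : Instance V) (T : Set (Node I)) : Prop :=
  T.ncard = (initialS I).ncard ∧
  -- (B1): no gray, purple, or brown node is in `T`
  (∀ w : Node I, Gray I w.1 ∨ Purple I w.1 ∨ Brown I w.1 → w ∉ T) ∧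
  -- (B2): every yellow node is in `T`
  (∀ w : Node I, Yellow I w.1 → w ∈ T) ∧
  -- (B3): a teal node is in `T` iff some orange node at distance five from it
  -- is not in `T`
  (∀ w : Node I, Teal I w.1 →
      (w ∈ T ↔ ∃ w' : Node I, Orange I w'.1 ∧ (H I).dist w w' = 5 ∧ w' ∉ T)) ∧
  -- (B4): orange nodes at distance four from each other are either both in
  -- `T` or both not in `T`
  (∀ w w' : Node I, Orange I w.1 → Orange I w'.1 → (H I).dist w w' = 4 →
      (w ∈ T ↔ w' ∈ T)) ∧
  -- (B5): in each connected component of the subgraph induced by the gray,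
  -- black and orange nodes there are exactly two orange nodes not in `T` at
  -- distance four from a black node, their black nodes are at distance six
  -- from each other, and no other black node of the component is at distance
  -- four from an orange node not in `T`
  (∀ w₀ : Node I, w₀ ∈ GBO I →
    ∃ o₁ o₂ b₁ b₂ : Node I,
      o₁ ≠ o₂ ∧ Orange I o₁.1 ∧ Orange I o₂.1 ∧ o₁ ∉ T ∧ o₂ ∉ T ∧
      Black I b₁.1 ∧ Black I b₂.1 ∧
      ReachGBO I w₀ o₁ ∧ ReachGBO I w₀ o₂ ∧ ReachGBO I w₀ b₁ ∧ ReachGBO I w₀ b₂ ∧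
      (H I).dist o₁ b₁ = 4 ∧ (H I).dist o₂ b₂ = 4 ∧ (H I).dist b₁ b₂ = 6 ∧
      (∀ o : Node I, Orange I o.1 → o ∉ T → ReachGBO I w₀ o →
        (∃ bb : Node I, Black I bb.1 ∧ (H I).dist o bb = 4) → o = o₁ ∨ o = o₂) ∧
      (∀ bb : Node I, Black I bb.1 → ReachGBO I w₀ bb →
        (∃ o : Node I, Orange I o.1 ∧ o ∉ T ∧ (H I).dist bb o = 4) → bb = b₁ ∨ bb = b₂))

/-- The discovery budget `b = Δ + Σ_{u} δ(u)·(4Σ(t+1) − δ(u))`. -/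
def Instance.budget (I : Instance V) : ℕ :=
  (∑ u : V, I.demand u) + ∑ u : V, I.demand u * (I.vlen - I.demand u)

end BandwidthConstruction


namespace BandwidthConstruction

variable {V : Type*} [Fintype V] [DecidableEq V]

/-- The labeling obtained by compressing an injective numbering. -/
theorem exists_compress {α : Type*} [Finite α] (g : α → ℕ) (hg : Function.Injective g) :
    ∃ f : α → ℕ, Function.Injective f ∧ Set.range f = Set.Icc 1 (Nat.card α) ∧
      ∀ w z, g w ≤ g z → f w ≤ f z ∧ f z ≤ f w + (g z - g w) := by
  classical
  haveI := Fintype.ofFinite α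
  let P : ℕ → Prop := fun n => ∃ w, g w = n
  have hmono : ∀ w z, g w ≤ g z → Nat.count P (g w) + 1 ≤ Nat.count P (g z) + 1 ∧
      Nat.count P (g z) + 1 ≤ Nat.count P (g w) + 1 + (g z - g w) := by
    intro w z h
    obtain ⟨d, hd⟩ := Nat.exists_eq_add_of_le h
    have h1 : Nat.count P (g z) = Nat.count P (g w) + Nat.count (fun k => P (g w + k)) d := by
      rw [hd, Nat.count_add]
    have h2 : Nat.count (fun k => P (g w + k)) d ≤ d := Nat.count_le _
    omega
  have hinj : Function.Injective (fun w => Nat.count P (g w) + 1) := by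
    intro w z h
    apply hg
    exact Nat.count_injective (p := P) ⟨w, rfl⟩ ⟨z, rfl⟩ (by simpa using h)
  refine ⟨fun w => Nat.count P (g w) + 1, hinj, ?_, hmono⟩
  have hsub : Finset.univ.image (fun w => Nat.count P (g w) + 1) ⊆ Finset.Icc 1 (Nat.card α) := by
    intro n hn
    obtain ⟨w, -, rfl⟩ := Finset.mem_image.1 hn
    rw [Finset.mem_Icc]
    refine ⟨by omega, ?_⟩
    have h3 : Nat.count P (g w + 1) = Nat.count P (g w) + 1 := by
      rw [Nat.count_succ, if_pos ⟨w, rfl⟩]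
    show Nat.count P (g w) + 1 ≤ _
    rw [← h3, Nat.count_eq_card_filter_range, Nat.card_eq_fintype_card, ← Finset.card_univ,
      ← Finset.card_image_of_injective _ hg]
    apply Finset.card_le_card
    intro m hm
    obtain ⟨v, hv⟩ := (Finset.mem_filter.1 hm).2
    exact Finset.mem_image.2 ⟨v, Finset.mem_univ _, hv⟩
  have heq := Finset.eq_of_subset_of_card_le hsub (by
    rw [Finset.card_image_of_injective _ hinj, Finset.card_univ, Nat.card_Icc,
      Nat.card_eq_fintype_card]; omega)
  have := congrArg (fun s : Finset ℕ => (s : Set ℕ)) heq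
  simpa using this

/-- Level of a rung of an arc-gadget. -/
def lvA (I : Instance V) (k : ℕ) : ℕ := if I.sg = 0 then k else (I.t - k) * (4 * I.sg)

/-- Level of a pre-node. -/
def lv (I : Instance V) : PreNode V → ℕ
  | PreNode.iso _ p => p
  | PreNode.con _ p => p
  | PreNode.vspacer _ p _ => p
  | PreNode.rail _ _ p => p + 4 * I.sg
  | PreNode.aspacer _ k _ => lvA I k

/-- Slot of a pre-node inside its level. -/
def slot (n : ℕ) (iV : V → ℕ) (iA : V × V → ℕ) : PreNode V → ℕ
  | PreNode.iso u _ => 7 * iV u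
  | PreNode.con u _ => 7 * iV u + 1
  | PreNode.vspacer u _ q => 7 * iV u + (2 + q)
  | PreNode.rail a s _ => 7 * (n + iA a) + (if s then 1 else 0)
  | PreNode.aspacer a _ q => 7 * (n + iA a) + (2 + q)

theorem lvA_inj (I : Instance V) {k l : ℕ} (hk : k < I.t) (hl : l < I.t)
    (h : lvA I k = lvA I l) : k = l := by
  unfold lvA at h
  split_ifs at h with h0
  · exact h
  · have := Nat.eq_of_mul_eq_mul_right (by omega) h
    omega

theorem lv_rung (I : Instance V) {k : ℕ} (hk : k < I.t) :
    (I.t - 1 - k) * (4 * I.sg) + 4 * I.sg = (I.t - k) * (4 * I.sg) := by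
  have : I.t - k = (I.t - 1 - k) + 1 := by omega
  rw [this]; ring

theorem lv_le (I : Instance V) (w : PreNode V) (hw : Valid I w) : lv I w ≤ I.vlen + I.t := by
  have hva : I.vlen = I.alen + 4 * I.sg := by unfold Instance.vlen Instance.alen; ring
  cases w with
  | iso u p => simp only [Valid, lv] at *; omega
  | con u p => simp only [Valid, lv] at *; omega
  | vspacer u p q => simp only [Valid, lv] at *; omega
  | rail a s p => simp only [Valid, lv] at *; omega
  | aspacer a k q =>
    simp only [Valid, lv, lvA] at *
    split_ifs
    · omega
    · have : (I.t - k) * (4 * I.sg) ≤ I.t * (4 * I.sg) := Nat.mul_le_mul_right _ (by omega)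
      have h2 : I.alen = I.t * (4 * I.sg) := by unfold Instance.alen; ring
      omega

theorem slot_lt (I : Instance V) (n m : ℕ) (iV : V → ℕ) (iA : V × V → ℕ)
    (hV : ∀ u, iV u < n) (hA : ∀ a ∈ I.arcs, iA a < m) (w : PreNode V) (hw : Valid I w) :
    slot n iV iA w < 7 * (n + m) := by
  cases w with
  | iso u p => have := hV u; simp only [Valid, slot] at *; omega
  | con u p => have := hV u; simp only [Valid, slot] at *; omega
  | vspacer u p q => have := hV u; simp only [Valid, slot] at *; omega
  | rail a s p =>
    have := hA a hw.1; simp only [Valid, slot] at *; split_ifs <;> omega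
  | aspacer a k q => have := hA a hw.1; simp only [Valid, slot] at *; omega

theorem node_inj (I : Instance V) (n : ℕ) (iV : V → ℕ) (iA : V × V → ℕ)
    (hV : ∀ u, iV u < n) (hVi : Function.Injective iV)
    (hAi : ∀ a ∈ I.arcs, ∀ b ∈ I.arcs, iA a = iA b → a = b)
    (w z : PreNode V) (hw : Valid I w) (hz : Valid I z)
    (h1 : lv I w = lv I z) (h2 : slot n iV iA w = slot n iV iA z) : w = z := by
  have key : ∀ x y r s : ℕ, r < 7 → s < 7 → 7 * x + r = 7 * y + s → x = y ∧ r = s := by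
    intros; omega
  cases w <;> cases z <;> simp only [Valid, lv, slot] at hw hz h1 h2
  case iso.iso u p v p' =>
    rw [hVi (show iV u = iV v by omega), h1]
  case con.con u p v p' =>
    rw [hVi (show iV u = iV v by omega), h1]
  case vspacer.vspacer u p q v p' q' =>
    rw [hVi (show iV u = iV v by omega), h1, show q = q' by omega]
  case rail.rail a s p b s' p' =>
    have hab : iA a = iA b := by split_ifs at h2 <;> omega
    rw [hAi a hw.1 b hz.1 hab, show p = p' by omega]
    cases s <;> cases s' <;> simp_all
  case aspacer.aspacer a k q b l q' =>
    rw [hAi a hw.1 b hz.1 (by omega), lvA_inj I hw.2.1 hz.2.1 h1, show q = q' by omega]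
  case iso.rail u _ _ _ _ => have := hV u; split_ifs at h2 <;> omega
  case con.rail u _ _ _ _ => have := hV u; split_ifs at h2 <;> omega
  case vspacer.rail u _ _ _ _ _ => have := hV u; split_ifs at h2 <;> omega
  case rail.iso _ _ _ u _ => have := hV u; split_ifs at h2 <;> omega
  case rail.con _ _ _ u _ => have := hV u; split_ifs at h2 <;> omega
  case rail.vspacer _ _ _ u _ _ => have := hV u; split_ifs at h2 <;> omega
  case rail.aspacer => split_ifs at h2 <;> omega
  case aspacer.rail => split_ifs at h2 <;> omega
  case iso.aspacer u _ _ _ _ => have := hV u; omega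
  case con.aspacer u _ _ _ _ => have := hV u; omega
  case vspacer.aspacer u _ _ _ _ _ => have := hV u; omega
  case aspacer.iso _ _ _ u _ => have := hV u; omega
  case aspacer.con _ _ _ u _ => have := hV u; omega
  case aspacer.vspacer _ _ _ u _ _ => have := hV u; omega
  all_goals omega

theorem rel_lv (I : Instance V) (w z : PreNode V) (hw : Valid I w) (hz : Valid I z)
    (h : Rel I w z) : lv I w ≤ lv I z + 3 ∧ lv I z ≤ lv I w + 3 := by
  rcases h with ⟨u, p, rfl, rfl⟩ | ⟨u, p, rfl, rfl⟩ | ⟨a, s, p, rfl, rfl⟩ | ⟨u, p, rfl, rfl⟩ |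
    ⟨u, p, q, rfl, rfl⟩ | ⟨u, p, rfl, rfl⟩ | ⟨a, k, hk, rfl, rfl⟩ | ⟨a, k, q, rfl, rfl⟩ |
    ⟨a, k, hk, rfl, rfl⟩ | ⟨a, s, k, hk, rfl, rfl⟩ | ⟨a, s, k, j, hk, -, -, rfl, rfl⟩
  · simp only [lv]; omega
  · simp only [lv]; omega
  · simp only [lv]; omega
  · simp only [lv]; omega
  · simp only [lv]; omega
  · simp only [lv]; omega
  · have h0 : I.sg ≠ 0 := by
      intro h0
      have := hw.2
      simp [Instance.alen, h0] at this
    have := lv_rung I hk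
    simp only [lv, lvA, if_neg h0]; omega
  · simp only [lv]; omega
  · have h0 : I.sg ≠ 0 := by
      intro h0
      have := hz.2
      simp [Instance.alen, h0] at this
    have := lv_rung I hk
    simp only [lv, lvA, if_neg h0]; omega
  · have := lv_rung I hk
    have := (I.typ (endpoint a s) (endpoint a (!s))).isLt
    simp only [lv]; omega
  · have := lv_rung I hk
    have := (I.typ (endpoint a s) (endpoint a (!s))).isLt
    simp only [lv]; omega

end BandwidthConstruction

open BandwidthConstruction in
/-- The bandwidth of the graph `H` of the bandwidth construction is at most
`66κ`, where `κ = |V(D)| + |A(D)|`: there is a bijective labeling of the nodes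
by `{1, …, N}` in which the labels of adjacent nodes differ by at most `66κ`. -/
theorem bandwidth_le {V : Type*} [Fintype V] [DecidableEq V] (I : Instance V) :
    ∃ f : Node I → ℕ, Function.Injective f ∧
      Set.range f = Set.Icc 1 (Nat.card (Node I)) ∧
      ∀ w z : Node I, (H I).Adj w z →
        ((f w : ℤ) - (f z : ℤ)).natAbs ≤ 66 * (Fintype.card V + I.arcs.card) := by
  classical
  obtain ⟨iV, hV, hVi⟩ : ∃ iV : V → ℕ, (∀ u, iV u < Fintype.card V) ∧ Function.Injective iV :=
    ⟨fun u => (Fintype.equivFin V u).val, fun u => (Fintype.equivFin V u).isLt,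
      fun u v h => (Fintype.equivFin V).injective (Fin.ext h)⟩
  obtain ⟨iA, hA, hAi⟩ : ∃ iA : V × V → ℕ, (∀ a ∈ I.arcs, iA a < I.arcs.card) ∧
      ∀ a ∈ I.arcs, ∀ b ∈ I.arcs, iA a = iA b → a = b := by
    refine ⟨fun a => if h : a ∈ I.arcs then (I.arcs.equivFin ⟨a, h⟩).val else 0, ?_, ?_⟩
    · intro a ha
      simp only [dif_pos ha]
      exact (I.arcs.equivFin ⟨a, ha⟩).isLt
    · intro a ha b hb h
      simp only [dif_pos ha, dif_pos hb] at h
      exact congrArg Subtype.val (I.arcs.equivFin.injective (Fin.ext h))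
  set K := Fintype.card V + I.arcs.card with hK
  have hs : ∀ w : Node I, slot (Fintype.card V) iV iA w.1 < 7 * K := fun w =>
    slot_lt I _ _ iV iA hV hA w.1 w.2
  let g : Node I → ℕ := fun w => 7 * K * lv I w.1 + slot (Fintype.card V) iV iA w.1
  have hg : Function.Injective g := by
    intro w z h
    have hw := hs w
    have hz := hs z
    have hpos : 0 < 7 * K := by omega
    have h' : 7 * K * lv I w.1 + slot (Fintype.card V) iV iA w.1 =
      7 * K * lv I z.1 + slot (Fintype.card V) iV iA z.1 := h
    have h1 := congrArg (· / (7 * K)) h'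
    have h2 := congrArg (· % (7 * K)) h'
    simp only [Nat.mul_add_div hpos, Nat.mul_add_mod, Nat.div_eq_of_lt hw, Nat.div_eq_of_lt hz,
      Nat.mod_eq_of_lt hw, Nat.mod_eq_of_lt hz, add_zero] at h1 h2
    exact Subtype.ext (node_inj I _ iV iA hV hVi hAi w.1 z.1 w.2 z.2 h1 h2)
  have hb : ∀ w, g w < 7 * K * (I.vlen + I.t) + 7 * K := fun w =>
    add_lt_add_of_le_of_lt (Nat.mul_le_mul_left _ (lv_le I w.1 w.2)) (hs w)
  haveI : Finite (Node I) := Finite.of_injective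
    (fun w => (⟨g w, hb w⟩ : Fin (7 * K * (I.vlen + I.t) + 7 * K)))
    (fun w z h => hg (congrArg Fin.val h))
  obtain ⟨f, hf, hr, hd⟩ := exists_compress g hg
  refine ⟨f, hf, hr, fun w z h => ?_⟩
  have hl : lv I w.1 ≤ lv I z.1 + 3 ∧ lv I z.1 ≤ lv I w.1 + 3 := by
    rcases ((SimpleGraph.fromRel_adj _ _ _).1 h).2 with h | h
    · exact rel_lv I _ _ w.2 z.2 h
    · exact (rel_lv I _ _ z.2 w.2 h).symm
  have e1 : 7 * K * lv I w.1 ≤ 7 * K * lv I z.1 + 21 * K := by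
    have := Nat.mul_le_mul_left (7 * K) hl.1
    linarith
  have e2 : 7 * K * lv I z.1 ≤ 7 * K * lv I w.1 + 21 * K := by
    have := Nat.mul_le_mul_left (7 * K) hl.2
    linarith
  have g1 : g w ≤ g z + 28 * K := by have := hs w; simp only [g]; omega
  have g2 : g z ≤ g w + 28 * K := by have := hs z; simp only [g]; omega
  rcases le_total (g w) (g z) with hh | hh
  · have := hd w z hh; omega
  · have := hd z w hh; omega
end
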